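/- Let 0 < α ≤ 1/100 be real, let M be a signing of K_{n,n}, and let x, y : Fin n → ℤ be vectors with all entries ±1 such that the number of pairs (i, j) with M i j ≠ x i · y j is at most 2·α·n². If s₁(M) ≤ α²·n⁴/64, then min{x⁺, x⁻, y⁺, y⁻} ≤ 3·√α·n, where x⁺, x⁻ are the numbers of +1 and −1 entries of x and y⁺, y⁻ are the numbers of +1 and −1 entries of y. That is, at least one of x and y has at least (1 − 3·√α)·n entries of the same sign. -/

import Mathlib

open Finset

/-- `M` is a signing of `K_{n,n}`: every entry is `+1` or `-1`. -/
def IsSigning (n : ℕ) (M : Fin n → Fin n → ℤ) : Prop :=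
  ∀ i j, M i j = 1 ∨ M i j = -1

/-- `s₁(M)`: the number of Type-1 switchers of `M`. -/
def type1SwitcherCount (n : ℕ) (M : Fin n → Fin n → ℤ) : ℕ :=
  (univ.filter fun p : Fin n × Fin n × Fin n × Fin n =>
    p.1 < p.2.1 ∧ p.2.2.1 < p.2.2.2 ∧
      M p.1 p.2.2.1 * M p.1 p.2.2.2 * M p.2.1 p.2.2.1 * M p.2.1 p.2.2.2 = 1 ∧
      M p.1 p.2.2.1 + M p.2.1 p.2.2.2 ≠ M p.1 p.2.2.2 + M p.2.1 p.2.2.1).card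

lemma main_count (n : ℕ) (M : Fin n → Fin n → ℤ) (x y : Fin n → ℤ)
    (hx : ∀ i, x i = 1 ∨ x i = -1) (hy : ∀ j, y j = 1 ∨ y j = -1) :
    (univ.filter fun i => x i = 1).card * (univ.filter fun i => x i = -1).card *
      ((univ.filter fun j => y j = 1).card * (univ.filter fun j => y j = -1).card) ≤
    type1SwitcherCount n M + ((univ ×ˢ univ).filter fun p : Fin n × Fin n =>
        M p.1 p.2 ≠ x p.1 * y p.2).card * (n * n) := by
  classical
  set E := (univ ×ˢ univ).filter fun p : Fin n × Fin n => M p.1 p.2 ≠ x p.1 * y p.2 with hE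
  set S := univ.filter fun p : Fin n × Fin n × Fin n × Fin n =>
    p.1 < p.2.1 ∧ p.2.2.1 < p.2.2.2 ∧
      M p.1 p.2.2.1 * M p.1 p.2.2.2 * M p.2.1 p.2.2.1 * M p.2.1 p.2.2.2 = 1 ∧
      M p.1 p.2.2.1 + M p.2.1 p.2.2.2 ≠ M p.1 p.2.2.2 + M p.2.1 p.2.2.1 with hS
  have hSc : type1SwitcherCount n M = S.card := rfl
  let Q := ((univ.filter fun i => x i = 1) ×ˢ (univ.filter fun i => x i = -1)) ×ˢ
      ((univ.filter fun j => y j = 1) ×ˢ (univ.filter fun j => y j = -1))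
  let o : Fin n → Fin n → Fin n × Fin n := fun a c => if x a = 1 then (a, c) else (c, a)
  let oy : Fin n → Fin n → Fin n × Fin n := fun a c => if y a = 1 then (a, c) else (c, a)
  let g : Fin n × Fin n × Fin n × Fin n → (Fin n × Fin n) × (Fin n × Fin n) :=
    fun p => (o p.1 p.2.1, oy p.2.2.1 p.2.2.2)
  let ge : (Fin n × Fin n) × (Fin n × Fin n) → (Fin n × Fin n) × (Fin n × Fin n) :=
    fun p => (o p.1.1 p.2.1, oy p.1.2 p.2.2)
  have hsub : Q ⊆ S.image g ∪ (E ×ˢ (univ : Finset (Fin n × Fin n))).image ge := by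
    rintro ⟨⟨a, c⟩, ⟨b, d⟩⟩ hq
    simp only [Q, mem_product, mem_filter, mem_univ, true_and] at hq
    obtain ⟨⟨ha, hc⟩, hb, hd⟩ := hq
    rw [mem_union]
    have bad : ∀ i j k l, M i j ≠ x i * y j → o i k = (a, c) → oy j l = (b, d) →
        ((a, c), (b, d)) ∈ (E ×ˢ (univ : Finset (Fin n × Fin n))).image ge := by
      intro i j k l h h1 h2
      refine mem_image.2 ⟨((i, j), (k, l)), ?_, ?_⟩
      · simp [hE, h]
      · simp [ge, h1, h2]
    have good : ∀ i k j l, (i, k, j, l) ∈ S → o i k = (a, c) → oy j l = (b, d) →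
        ((a, c), (b, d)) ∈ S.image g := by
      intro i k j l h h1 h2
      refine mem_image.2 ⟨(i, k, j, l), h, ?_⟩
      simp [g, h1, h2]
    have o1 : o a c = (a, c) := by simp [o, ha]
    have o2 : o c a = (a, c) := by simp [o, hc]
    have o3 : oy b d = (b, d) := by simp [oy, hb]
    have o4 : oy d b = (b, d) := by simp [oy, hd]
    by_cases e1 : M a b = x a * y b
    swap
    · exact Or.inr (bad a b c d e1 o1 o3)
    by_cases e2 : M a d = x a * y d
    swap
    · exact Or.inr (bad a d c b e2 o1 o4)
    by_cases e3 : M c b = x c * y b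
    swap
    · exact Or.inr (bad c b a d e3 o2 o3)
    by_cases e4 : M c d = x c * y d
    swap
    · exact Or.inr (bad c d a b e4 o2 o4)
    left
    have hac : a ≠ c := by rintro rfl; omega
    have hbd : b ≠ d := by rintro rfl; omega
    rcases lt_or_gt_of_ne hac with h1 | h1 <;> rcases lt_or_gt_of_ne hbd with h2 | h2
    · exact good a c b d (by simp [hS, h1, h2, e1, e2, e3, e4, ha, hb, hc, hd]) o1 o3
    · exact good a c d b (by simp [hS, h1, h2, e1, e2, e3, e4, ha, hb, hc, hd]) o1 o4
    · exact good c a b d (by simp [hS, h1, h2, e1, e2, e3, e4, ha, hb, hc, hd]) o2 o3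
    · exact good c a d b (by simp [hS, h1, h2, e1, e2, e3, e4, ha, hb, hc, hd]) o2 o4
  have h1 := card_le_card hsub
  have h2 := card_union_le (S.image g) ((E ×ˢ (univ : Finset (Fin n × Fin n))).image ge)
  have h3 : (S.image g).card ≤ S.card := card_image_le
  have h4 : ((E ×ˢ (univ : Finset (Fin n × Fin n))).image ge).card ≤ E.card * (n * n) := by
    refine card_image_le.trans ?_
    simp [card_product]
  simp only [Q, card_product] at h1
  rw [hSc]
  omega

lemma sign_count (n : ℕ) (x : Fin n → ℤ) (hx : ∀ i, x i = 1 ∨ x i = -1) :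
    (univ.filter fun i => x i = 1).card + (univ.filter fun i => x i = -1).card = n := by
  have h := card_filter_add_card_filter_not (s := (univ : Finset (Fin n))) (fun i => x i = 1)
  have h2 : (univ.filter fun i => ¬ x i = 1) = univ.filter fun i => x i = -1 := by
    ext i
    simp only [mem_filter, mem_univ, true_and]
    rcases hx i with h | h <;> simp [h]
  rw [h2] at h
  simpa using h

theorem one_side_almost_constant (n : ℕ) (α : ℝ) (hα : 0 < α)
    (hα' : α ≤ 1 / 100) (M : Fin n → Fin n → ℤ) (hM : IsSigning n M)
    (x y : Fin n → ℤ)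
    (hx : ∀ i, x i = 1 ∨ x i = -1) (hy : ∀ j, y j = 1 ∨ y j = -1)
    (hclose : (((univ ×ˢ univ).filter fun p : Fin n × Fin n =>
        M p.1 p.2 ≠ x p.1 * y p.2).card : ℝ) ≤ 2 * α * n ^ 2)
    (hs1 : (type1SwitcherCount n M : ℝ) ≤ α ^ 2 * n ^ 4 / 64) :
    min (min ((univ.filter fun i => x i = 1).card : ℝ)
             ((univ.filter fun i => x i = -1).card : ℝ))
        (min ((univ.filter fun j => y j = 1).card : ℝ)
             ((univ.filter fun j => y j = -1).card : ℝ))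
      ≤ 3 * Real.sqrt α * n := by
  have hc := main_count n M x y hx hy
  have hxs := sign_count n x hx
  have hys := sign_count n y hy
  generalize (univ.filter fun i => x i = 1).card = A at *
  generalize (univ.filter fun i => x i = -1).card = B at *
  generalize (univ.filter fun i => y i = 1).card = C at *
  generalize (univ.filter fun i => y i = -1).card = D at *
  generalize type1SwitcherCount n M = S at *
  generalize ((univ ×ˢ univ).filter fun p : Fin n × Fin n =>
        M p.1 p.2 ≠ x p.1 * y p.2).card = E at *
  by_contra hcon
  simp only [not_le, lt_min_iff] at hcon
  obtain ⟨⟨hA, hB⟩, hC, hD⟩ := hcon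
  have hs0 : 0 < Real.sqrt α := Real.sqrt_pos.2 hα
  have hsq : Real.sqrt α ^ 2 = α := Real.sq_sqrt hα.le
  generalize Real.sqrt α = s at *
  have hsle : s ≤ 1 / 10 := by nlinarith
  have hn : 0 < n := by
    rcases Nat.eq_zero_or_pos n with h | h
    · subst h
      have : A = 0 := by omega
      subst this
      simp at hA
    · exact h
  have hnR : (0 : ℝ) < n := by exact_mod_cast hn
  have hcR : (A : ℝ) * B * (C * D) ≤ S + E * (n * n) := by exact_mod_cast hc
  have hxR : (A : ℝ) + B = n := by exact_mod_cast hxs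
  have hyR : (C : ℝ) + D = n := by exact_mod_cast hys
  have key : ∀ a b : ℝ, 3 * s * n < a → 3 * s * n < b → a + b = n →
      21 / 10 * s * n ^ 2 ≤ a * b := by
    intro a b h1 h2 h3
    have h4 := mul_pos (sub_pos.2 h1) (sub_pos.2 h2)
    have h5 : a * b > 3 * s * n * (a + b) - (3 * s * n) ^ 2 := by nlinarith
    rw [h3] at h5
    have h6 : 0 ≤ s * n ^ 2 * (1 / 10 - s) := by
      have : 0 ≤ 1 / 10 - s := by linarith
      positivity
    nlinarith
  have k1 := key A B hA hB hxR
  have k2 := key C D hC hD hyR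
  have k3 : (21 / 10 * s * n ^ 2) * (21 / 10 * s * n ^ 2) ≤ (A : ℝ) * B * (C * D) :=
    mul_le_mul k1 k2 (by positivity) (by positivity)
  have k4 : (21 / 10 * s * n ^ 2) * (21 / 10 * s * n ^ 2) = 441 / 100 * (α * (n : ℝ) ^ 4) := by
    rw [← hsq]; ring
  have k5 : (E : ℝ) * (n * n) ≤ 2 * (α * (n : ℝ) ^ 4) := by
    have := mul_le_mul_of_nonneg_right hclose (by positivity : (0 : ℝ) ≤ n * n)
    nlinarith
  have k6 : 0 < α * (n : ℝ) ^ 4 := by positivity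
  have k7 : α ^ 2 * (n : ℝ) ^ 4 / 64 ≤ α * (n : ℝ) ^ 4 := by
    have := mul_le_mul_of_nonneg_right hα' k6.le
    nlinarith
  linarith
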